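/- arXiv:2412.21032 — 3 statements merged into one kernel-verified Lean document; each statement's English description precedes it below -/
import Mathlib

section
/- In any 2-crossed module (L →δ H →∂ G, ▷, {·,·}_p), the map ▷' acts by group automorphisms: for all h ∈ H and l₁, l₂ ∈ L one has h ▷' (l₁l₂) = (h ▷' l₁) · (h ▷' l₂). -/
/-- A 2-crossed module `(L --δ--> H --∂--> G, ▷, Peiffer lifting)`:
groups `G H L`, homomorphisms `δ : L → H` (field `δ`) and `∂ : H → G` (field `bd`)
with `∂ ∘ δ = 1`, left actions `▷` of `G` on `H` and `L` by automorphisms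
(fields `actH`, `actL`; `G` acts on itself by conjugation), and the Peiffer
lifting `{·,·}_p : H × H → L` (field `pf`), subject to the usual axioms. -/
structure TwoCrossedModule (G H L : Type*) [Group G] [Group H] [Group L] where
  δ : L →* H
  bd : H →* G
  actH : G →* MulAut H
  actL : G →* MulAut L
  pf : H → H → L
  comp_eq_one : ∀ l : L, bd (δ l) = 1
  -- (i) g ▷ ∂(h) = ∂(g ▷ h), where G acts on itself by conjugation
  act_bd : ∀ (g : G) (h : H), g * bd h * g⁻¹ = bd (actH g h)
  -- (i) g ▷ δ(l) = δ(g ▷ l)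
  act_δ : ∀ (g : G) (l : L), actH g (δ l) = δ (actL g l)
  -- (ii) g ▷ {h₁,h₂}_p = {g ▷ h₁, g ▷ h₂}_p
  act_pf : ∀ (g : G) (h₁ h₂ : H), actL g (pf h₁ h₂) = pf (actH g h₁) (actH g h₂)
  -- (iii) δ({h₁,h₂}_p) = h₁h₂h₁⁻¹·(∂(h₁) ▷ h₂⁻¹)
  δ_pf : ∀ h₁ h₂ : H, δ (pf h₁ h₂) = h₁ * h₂ * h₁⁻¹ * actH (bd h₁) h₂⁻¹
  -- (iv) {δ(l₁), δ(l₂)}_p = l₁l₂l₁⁻¹l₂⁻¹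
  pf_δ_δ : ∀ l₁ l₂ : L, pf (δ l₁) (δ l₂) = l₁ * l₂ * l₁⁻¹ * l₂⁻¹
  -- (v) {h₁h₂, h₃}_p = {h₁, h₂h₃h₂⁻¹}_p · (∂(h₁) ▷ {h₂,h₃}_p)
  pf_mul_left : ∀ h₁ h₂ h₃ : H,
    pf (h₁ * h₂) h₃ = pf h₁ (h₂ * h₃ * h₂⁻¹) * actL (bd h₁) (pf h₂ h₃)
  -- (vi) {h₁, h₂h₃}_p = {h₁,h₂}_p · {h₁,h₃}_p · {⟨h₁,h₃⟩_p⁻¹, ∂(h₁) ▷ h₂}_p,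
  -- where ⟨h₁,h₃⟩_p = h₁h₃h₁⁻¹·(∂(h₁) ▷ h₃⁻¹) is the Peiffer commutator
  pf_mul_right : ∀ h₁ h₂ h₃ : H,
    pf h₁ (h₂ * h₃) = pf h₁ h₂ * pf h₁ h₃ *
      pf (h₁ * h₃ * h₁⁻¹ * actH (bd h₁) h₃⁻¹)⁻¹ (actH (bd h₁) h₂)
  -- (vii) {δ(l), h}_p · {h, δ(l)}_p = l·(∂(h) ▷ l⁻¹)
  pf_δ : ∀ (h : H) (l : L), pf (δ l) h * pf h (δ l) = l * actL (bd h) l⁻¹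

namespace TwoCrossedModule

variable {G H L : Type*} [Group G] [Group H] [Group L]

/-- The map `▷' : H × L → L`, defined by `h ▷' l = l · {δ(l)⁻¹, h}_p`. -/
def act' (X : TwoCrossedModule G H L) (h : H) (l : L) : L :=
  l * X.pf (X.δ l)⁻¹ h

end TwoCrossedModule

/-!
By axiom (vi), `{h₁, h₂h₃}_p = {h₁, h₂}_p · ((∂(h₁) ▷ h₂) ▷' {h₁, h₃}_p)`, and by axiom (iv)
`δ(m) ▷'` is conjugation by `m`. As `∂ ∘ δ = 1`, conjugating `h` by `δ(m)` multiplies it on the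
left by `δ({δ(m), h}_p)`, so axiom (v) yields the twisted multiplicativity
`{δ(lm), h}_p = l {δ(m), h}_p l⁻¹ {δ(l), h}_p`. At `l = l₂⁻¹`, `m = l₁⁻¹` this says that `h ▷'`
is multiplicative.
-/

namespace TwoCrossedModule

variable {G H L : Type*} [Group G] [Group H] [Group L] (X : TwoCrossedModule G H L)

theorem actH_bd_δ (l : L) (h : H) : X.actH (X.bd (X.δ l)) h = h := by
  rw [X.comp_eq_one, map_one, MulAut.one_apply]

theorem actL_bd_δ (l m : L) : X.actL (X.bd (X.δ l)) m = m := by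
  rw [X.comp_eq_one, map_one, MulAut.one_apply]

theorem act'_δ (l m : L) : X.act' (X.δ m) l = m * l * m⁻¹ := by
  rw [act', ← map_inv, X.pf_δ_δ]
  group

theorem pf_mul_right_eq_mul_act' (h₁ h₂ h₃ : H) :
    X.pf h₁ (h₂ * h₃) = X.pf h₁ h₂ * X.act' (X.actH (X.bd h₁) h₂) (X.pf h₁ h₃) := by
  rw [act', X.δ_pf, X.pf_mul_right, mul_assoc]

theorem δ_conj_eq_δ_pf_mul (l : L) (h : H) :
    X.δ l * h * (X.δ l)⁻¹ = X.δ (X.pf (X.δ l) h) * h := by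
  rw [X.δ_pf, X.actH_bd_δ, inv_mul_cancel_right]

theorem pf_δ_δ_mul (l m : L) (h : H) :
    X.pf (X.δ l) (X.δ m * h) = l * m * l⁻¹ * X.pf (X.δ l) h * m⁻¹ := by
  rw [X.pf_mul_right_eq_mul_act', X.actH_bd_δ, X.act'_δ, X.pf_δ_δ]
  group

theorem pf_δ_mul_left (l m : L) (h : H) :
    X.pf (X.δ (l * m)) h = l * X.pf (X.δ m) h * l⁻¹ * X.pf (X.δ l) h := by
  rw [map_mul, X.pf_mul_left, X.actL_bd_δ, X.δ_conj_eq_δ_pf_mul, X.pf_δ_δ_mul,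
    inv_mul_cancel_right]

theorem act'_eq_mul_pf_δ_inv (h : H) (l : L) : X.act' h l = l * X.pf (X.δ l⁻¹) h := by
  rw [act', map_inv]

end TwoCrossedModule

/-- In any 2-crossed module, `▷'` acts by group automorphisms:
`h ▷' (l₁l₂) = (h ▷' l₁) · (h ▷' l₂)`. -/
theorem act'_mul {G H L : Type*} [Group G] [Group H] [Group L]
    (X : TwoCrossedModule G H L) (h : H) (l₁ l₂ : L) :
    X.act' h (l₁ * l₂) = X.act' h l₁ * X.act' h l₂ := by
  calc X.act' h (l₁ * l₂)
      = l₁ * l₂ * X.pf (X.δ (l₂⁻¹ * l₁⁻¹)) h := by rw [X.act'_eq_mul_pf_δ_inv, mul_inv_rev]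
    _ = l₁ * X.pf (X.δ l₁⁻¹) h * (l₂ * X.pf (X.δ l₂⁻¹) h) := by rw [X.pf_δ_mul_left]; group
    _ = X.act' h l₁ * X.act' h l₂ := by simp only [X.act'_eq_mul_pf_δ_inv]
end

section
/- In any 2-crossed module (L →δ H →∂ G, ▷, {·,·}_p), the homomorphism δ is equivariant for the action ▷': for all h ∈ H and l ∈ L one has δ(h ▷' l) = h · δ(l) · h⁻¹. -/
open scoped commutatorElement

namespace TwoCrossedModule

variable {G H L : Type*} [Group G] [Group H] [Group L] (X : TwoCrossedModule G H L)

theorem bd_δ_inv (l : L) : X.bd (X.δ l)⁻¹ = 1 := by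
  rw [map_inv, X.comp_eq_one, inv_one]

theorem δ_pf_of_bd_eq_one {k : H} (hk : X.bd k = 1) (h : H) : X.δ (X.pf k h) = ⁅k, h⁆ := by
  rw [X.δ_pf, hk, map_one, MulAut.one_apply, commutatorElement_def]

end TwoCrossedModule

/-- In any 2-crossed module, `δ` is equivariant for the action `▷'`:
`δ(h ▷' l) = h · δ(l) · h⁻¹`. -/
theorem δ_act' {G H L : Type*} [Group G] [Group H] [Group L]
    (X : TwoCrossedModule G H L) (h : H) (l : L) :
    X.δ (X.act' h l) = h * X.δ l * h⁻¹ := by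
  calc
    X.δ (X.act' h l) = X.δ l * X.δ (X.pf (X.δ l)⁻¹ h) := map_mul X.δ _ _
    _ = X.δ l * ⁅(X.δ l)⁻¹, h⁆ := by rw [X.δ_pf_of_bd_eq_one (X.bd_δ_inv l)]
    _ = h * X.δ l * h⁻¹ := by group
end

section
/- In any 2-crossed module (L →δ H →∂ G, ▷, {·,·}_p), for all h₁, h₂, h₃ ∈ H one has {h₁h₂, h₃}_p = (h₁ ▷' {h₂, h₃}_p) · {h₁, ∂(h₂) ▷ h₃}_p. -/
/-!
By (iii), `h₂h₃h₂⁻¹ = δ({h₂,h₃}_p) · (∂(h₂) ▷ h₃)`, so after expanding `{h₁h₂, h₃}_p` with (v) one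
must pull a factor `δ(l)` out of the second slot of `{h₁, ·}_p`. In (vi) the correction term then
pairs two elements of the image of `δ`, so by (iv) it is a commutator in `L`, and the expansion
becomes `{h, δ(l)k}_p = {h, δ(l)}_p · (∂(h) ▷ l) · {h, k}_p · (∂(h) ▷ l)⁻¹`. The first two factors
together are `h ▷' l`: take `k = δ(l)⁻¹` here and compare with (vii) at `l⁻¹`.
-/

namespace TwoCrossedModule

variable {G H L : Type*} [Group G] [Group H] [Group L] (X : TwoCrossedModule G H L)

theorem conj_eq_δ_pf_mul_actH (h k : H) :
    h * k * h⁻¹ = X.δ (X.pf h k) * X.actH (X.bd h) k := by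
  rw [X.δ_pf, map_inv, inv_mul_cancel_right]

theorem pf_δ_mul_right (h k : H) (l : L) :
    X.pf h (X.δ l * k) =
      X.pf h (X.δ l) * X.actL (X.bd h) l * X.pf h k * (X.actL (X.bd h) l)⁻¹ := by
  rw [X.pf_mul_right, ← X.δ_pf, X.act_δ, ← map_inv, X.pf_δ_δ]
  group

theorem pf_one_right (h : H) : X.pf h 1 = 1 := by
  simpa using X.pf_δ_mul_right h 1 1

theorem actL_mul_inv_pf_δ_inv_right (h : H) (l : L) :
    X.actL (X.bd h) l * (X.pf h (X.δ l)⁻¹)⁻¹ = X.pf h (X.δ l) * X.actL (X.bd h) l := by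
  have expansion := X.pf_δ_mul_right h (X.δ l)⁻¹ l
  rw [mul_inv_cancel, X.pf_one_right, eq_mul_inv_iff_mul_eq, one_mul] at expansion
  exact mul_inv_eq_of_eq_mul expansion

theorem act'_eq_pf_δ_right_mul_actL (h : H) (l : L) :
    X.act' h l = X.pf h (X.δ l) * X.actL (X.bd h) l := by
  have pf_δ_inv_left :
      X.pf (X.δ l)⁻¹ h = l⁻¹ * X.actL (X.bd h) l * (X.pf h (X.δ l)⁻¹)⁻¹ := by
    simpa only [map_inv, inv_inv] using eq_mul_inv_of_mul_eq (X.pf_δ h l⁻¹)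
  rw [act', pf_δ_inv_left, mul_assoc, mul_inv_cancel_left, X.actL_mul_inv_pf_δ_inv_right]

end TwoCrossedModule

/-- In any 2-crossed module,
`{h₁h₂, h₃}_p = (h₁ ▷' {h₂, h₃}_p) · {h₁, ∂(h₂) ▷ h₃}_p`. -/
theorem pf_mul_left' {G H L : Type*} [Group G] [Group H] [Group L]
    (X : TwoCrossedModule G H L) (h₁ h₂ h₃ : H) :
    X.pf (h₁ * h₂) h₃ = X.act' h₁ (X.pf h₂ h₃) * X.pf h₁ (X.actH (X.bd h₂) h₃) := by
  rw [X.pf_mul_left, X.conj_eq_δ_pf_mul_actH h₂ h₃, X.pf_δ_mul_right,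
    ← X.act'_eq_pf_δ_right_mul_actL, inv_mul_cancel_right]
end
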